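/- arXiv:0806.4156 — 2 statements merged into one kernel-verified Lean document; each statement's English description precedes it below -/
import Mathlib

section
/- Let R be a purely infinite exchange ring. Then every nonzero idempotent in R is properly infinite. -/
/-- `x ≼ y` for square matrices over a (possibly nonunital) ring: `x = α * y * β`
for some rectangular matrices `α`, `β`. -/
def MatSub {R : Type*} [NonUnitalRing R] {k n : ℕ}
    (x : Matrix (Fin k) (Fin k) R) (y : Matrix (Fin n) (Fin n) R) : Prop :=
  ∃ (α : Matrix (Fin k) (Fin n) R) (β : Matrix (Fin n) (Fin k) R), x = α * y * β

/-- `a ⊕ b ≼ c` for ring elements: the block-diagonal matrix `diag(a, b)` satisfies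
`diag(a,b) ≼ (c)` as square matrices. -/
def PairSub {R : Type*} [NonUnitalRing R] (a b c : R) : Prop :=
  MatSub !![a, 0; 0, b] !![c]

/-- `a ≼ b` for ring elements: `a = α * b * β` for some ring elements. -/
def ElemSub {R : Type*} [NonUnitalRing R] (a b : R) : Prop :=
  ∃ α β : R, a = α * b * β

/-- `K(a) = { x | a ⊕ x ≼ a }`. -/
def KSet {R : Type*} [NonUnitalRing R] (a : R) : Set R := { x | PairSub a x a }

/-- An element `a` is infinite if `a ⊕ x ≼ a` for some nonzero `x`, i.e. `K(a) ≠ 0`. -/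
def IsInfiniteElem {R : Type*} [NonUnitalRing R] (a : R) : Prop :=
  ∃ x : R, x ≠ 0 ∧ PairSub a x a

/-- An element `a` is properly infinite if `a ≠ 0` and `a ⊕ a ≼ a`. -/
def IsProperlyInfiniteElem {R : Type*} [NonUnitalRing R] (a : R) : Prop :=
  a ≠ 0 ∧ PairSub a a a

/-- A ring is s-unital if each element `x` admits `u, v` with `u * x = x` and `x * v = x`. -/
def IsSUnitalRing (R : Type*) [NonUnitalRing R] : Prop :=
  ∀ x : R, (∃ u : R, u * x = x) ∧ (∃ v : R, x * v = x)

/-- `b` belongs to `RaR`, the set of finite sums `Σ xᵢ * a * yᵢ`. -/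
def MemRaR {R : Type*} [NonUnitalRing R] (a b : R) : Prop :=
  ∃ (n : ℕ) (x y : Fin n → R), b = ∑ i, x i * a * y i

/-- A (possibly nonunital) ring is a division ring: it has a nonzero multiplicative identity
with respect to which every nonzero element is two-sided invertible. -/
def IsDivisionRingPred (R : Type*) [NonUnitalRing R] : Prop :=
  ∃ u : R, u ≠ 0 ∧ (∀ x : R, u * x = x ∧ x * u = x) ∧
    ∀ x : R, x ≠ 0 → ∃ y : R, x * y = u ∧ y * x = u

/-- A ring `R` is purely infinite if no quotient of `R` by a two-sided ideal is a division
ring, and `b ∈ RaR` implies `b = x * a * y` for some `x, y ∈ R`. -/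
def IsPurelyInfiniteRing (R : Type*) [NonUnitalRing R] : Prop :=
  (∀ I : TwoSidedIdeal R, ¬ IsDivisionRingPred I.ringCon.Quotient) ∧
  ∀ a b : R, MemRaR a b → ElemSub b a

/-- A ring is properly purely infinite if every nonzero element is properly infinite. -/
def IsProperlyPurelyInfiniteRing (R : Type*) [NonUnitalRing R] : Prop :=
  ∀ a : R, a ≠ 0 → IsProperlyInfiniteElem a

/-- An idempotent `e` is infinite if `e ∼ f ≤ e` for some idempotent `f ≠ e`. -/
def IsInfiniteIdem {R : Type*} [NonUnitalRing R] (e : R) : Prop :=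
  IsIdempotentElem e ∧ ∃ f : R, IsIdempotentElem f ∧ (∃ x y : R, e = x * y ∧ f = y * x) ∧
    e * f = f ∧ f * e = f ∧ f ≠ e

/-- An exchange ring: for each `x` there are an idempotent `e` and elements `r, s` with
`e = x * r = x + s - x * s`. -/
def IsExchangeRing (R : Type*) [NonUnitalRing R] : Prop :=
  ∀ x : R, ∃ e r s : R, IsIdempotentElem e ∧ e = x * r ∧ e = x + s - x * s

/-- A ring has local units if every finite subset is contained in a corner `eRe`
for some idempotent `e`. -/
def HasLocalUnits (R : Type*) [NonUnitalRing R] : Prop :=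
  ∀ s : Finset R, ∃ e : R, IsIdempotentElem e ∧ ∀ x ∈ s, ∃ r : R, x = e * r * e

/-!
Suppose the idempotent `e` is not properly infinite. Then `K(e)` is an ideal avoiding `e`; enlarge
it to an ideal `P` maximal among those avoiding `e`. In `S = R / P` every nonzero element `s`
satisfies `e ≼ s`. Let `f ≤ e` be an idempotent of `R` outside `P` and suppose `f s = 0` for some
nonzero `s ∈ S`. Writing `f = p s q` in `S`, the exchange property lifts this relation to an
idempotent `g ≤ f` of `R` outside `P` that has a copy orthogonal to it, and pure infiniteness then
gives `g ⊕ g ≼ g`, so that `g ∈ K(g) ⊆ K(e) ⊆ P`, a contradiction. Hence every such `f` is left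
cancellable in `S`. This makes `e` the identity of `S`, and it leaves no idempotents strictly
between `0` and `e` in `S` that come from `e R e`; by the exchange property `S` is then a division
ring, which pure infiniteness forbids.
-/

section PairSub

variable {R : Type*} [NonUnitalRing R]

theorem pairSub_iff {a b c : R} :
    PairSub a b c ↔ ∃ a₁ a₂ b₁ b₂ : R,
      a₁ * c * b₁ = a ∧ a₁ * c * b₂ = 0 ∧ a₂ * c * b₁ = 0 ∧ a₂ * c * b₂ = b := by
  constructor
  · rintro ⟨α, β, h⟩
    have entry (i j : Fin 2) : α i 0 * c * β 0 j = !![a, 0; 0, b] i j := by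
      rw [h]; simp [Matrix.mul_apply]
    exact ⟨α 0 0, α 1 0, β 0 0, β 0 1, entry 0 0, entry 0 1, entry 1 0, entry 1 1⟩
  · rintro ⟨a₁, a₂, b₁, b₂, h₁₁, h₁₂, h₂₁, h₂₂⟩
    refine ⟨!![a₁; a₂], !![b₁, b₂], ?_⟩
    ext i j
    fin_cases i <;> fin_cases j <;> simp [Matrix.mul_apply, h₁₁, h₁₂, h₂₁, h₂₂]

theorem ElemSub.pairSub_zero {a c : R} (h : ElemSub a c) : PairSub a 0 c := by
  obtain ⟨α, β, rfl⟩ := h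
  exact pairSub_iff.2 ⟨α, 0, β, 0, by simp⟩

theorem PairSub.trans_elemSub {a b c d : R} (h : PairSub a b c) (hcd : ElemSub c d) :
    PairSub a b d := by
  obtain ⟨a₁, a₂, b₁, b₂, h₁₁, h₁₂, h₂₁, h₂₂⟩ := pairSub_iff.1 h
  obtain ⟨α, β, rfl⟩ := hcd
  refine pairSub_iff.2 ⟨a₁ * α, a₂ * α, β * b₁, β * b₂, ?_⟩
  simp only [mul_assoc] at *
  exact ⟨h₁₁, h₁₂, h₂₁, h₂₂⟩

theorem PairSub.add_trans {a x b y c : R} (hab : PairSub a x b) (hbc : PairSub b y c) :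
    PairSub a (x + y) c := by
  obtain ⟨a₁, a₂, b₁, b₂, h₁₁, h₁₂, h₂₁, h₂₂⟩ := pairSub_iff.1 hab
  obtain ⟨c₁, c₂, d₁, d₂, k₁₁, k₁₂, k₂₁, k₂₂⟩ := pairSub_iff.1 hbc
  have inner (r s : R) : r * c₁ * c * (d₁ * s) = r * b * s := by
    rw [← k₁₁]
    simp only [mul_assoc]
  have right (r : R) : r * c₁ * c * d₂ = 0 := by
    rw [mul_assoc, mul_assoc, ← mul_assoc c₁, k₁₂, mul_zero]
  have left (s : R) : c₂ * c * (d₁ * s) = 0 := by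
    rw [← mul_assoc, k₂₁, zero_mul]
  refine pairSub_iff.2 ⟨a₁ * c₁, a₂ * c₁ + c₂, d₁ * b₁, d₁ * b₂ + d₂, ?_, ?_, ?_, ?_⟩
  · rw [inner, h₁₁]
  · rw [mul_add, inner, right, h₁₂, add_zero]
  · rw [add_mul, add_mul, inner, left, h₂₁, add_zero]
  · rw [add_mul, add_mul, mul_add, mul_add, inner, right, left, h₂₂, k₂₂, add_zero, zero_add]

theorem PairSub.neg_right {a x c : R} (h : PairSub a x c) : PairSub a (-x) c := by
  obtain ⟨a₁, a₂, b₁, b₂, h₁₁, h₁₂, h₂₁, h₂₂⟩ := pairSub_iff.1 h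
  exact pairSub_iff.2 ⟨a₁, -a₂, b₁, b₂, h₁₁, h₁₂, by simp [h₂₁], by simp [h₂₂]⟩

theorem PairSub.mul_left {a x c : R} (h : PairSub a x c) (r : R) : PairSub a (r * x) c := by
  obtain ⟨a₁, a₂, b₁, b₂, h₁₁, h₁₂, h₂₁, h₂₂⟩ := pairSub_iff.1 h
  refine pairSub_iff.2 ⟨a₁, r * a₂, b₁, b₂, h₁₁, h₁₂, ?_, ?_⟩
  · rw [mul_assoc r, mul_assoc r, h₂₁, mul_zero]
  · rw [mul_assoc r, mul_assoc r, h₂₂]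

theorem PairSub.mul_right {a x c : R} (h : PairSub a x c) (r : R) : PairSub a (x * r) c := by
  obtain ⟨a₁, a₂, b₁, b₂, h₁₁, h₁₂, h₂₁, h₂₂⟩ := pairSub_iff.1 h
  refine pairSub_iff.2 ⟨a₁, a₂, b₁, b₂ * r, h₁₁, ?_, h₂₁, ?_⟩
  · rw [← mul_assoc, h₁₂, zero_mul]
  · rw [← mul_assoc, h₂₂]

theorem PairSub.of_idempotent_le {g e x : R} (hg : IsIdempotentElem g) (he : IsIdempotentElem e)
    (heg : e * g = g) (hge : g * e = g) (h : PairSub g x g) : PairSub e x e := by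
  obtain ⟨a₁, a₂, b₁, b₂, h₁₁, h₁₂, h₂₁, h₂₂⟩ := pairSub_iff.1 h
  have left_orthogonal : (e - g) * e * g = 0 := by
    rw [sub_mul, hge, sub_mul, he.eq, heg, hg.eq, sub_self]
  have right_orthogonal : g * e * (e - g) = 0 := by
    rw [hge, mul_sub, hge, hg.eq, sub_self]
  have complement : (e - g) * e * (e - g) = e - g := by
    rw [sub_mul, hge, he.eq, mul_sub, sub_mul, sub_mul, he.eq, hge, heg, hg.eq, sub_self, sub_zero]
  have compress (r s : R) : r * g * e * (g * s) = r * g * s := by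
    rw [mul_assoc r, hge, ← mul_assoc, mul_assoc r, hg.eq]
  refine pairSub_iff.2 ⟨e - g + g * a₁ * g, a₂ * g, e - g + g * b₁ * g, g * b₂, ?_, ?_, ?_, ?_⟩
  · calc (e - g + g * a₁ * g) * e * (e - g + g * b₁ * g)
        = (e - g) * e * (e - g) + (e - g) * e * g * (b₁ * g) + g * a₁ * (g * e * (e - g))
          + g * a₁ * g * e * (g * (b₁ * g)) := by simp only [add_mul, mul_add, mul_assoc]; abel
      _ = e - g + g * (a₁ * g * b₁) * g := by
        rw [complement, left_orthogonal, right_orthogonal, compress]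
        simp only [mul_assoc, zero_mul, mul_zero, add_zero]
      _ = e := by rw [h₁₁, hg.eq, hg.eq, sub_add_cancel]
  · rw [add_mul, add_mul, compress, ← mul_assoc _ g, left_orthogonal, zero_mul, zero_add,
      mul_assoc g, mul_assoc g, h₁₂, mul_zero]
  · rw [mul_add, mul_assoc g, compress, ← mul_assoc _ b₁, h₂₁, zero_mul, add_zero, mul_assoc a₂,
      mul_assoc a₂, right_orthogonal, mul_zero]
  · rw [compress, h₂₂]

/-- The set `K(a)` as a two-sided ideal. The hypothesis `a ≼ a` is what puts `0` into `K(a)`; it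
holds for idempotents. -/
def kIdeal (a : R) (ha : ElemSub a a) : TwoSidedIdeal R :=
  .mk' (KSet a) ha.pairSub_zero (fun hx hy => PairSub.add_trans hx hy) (fun hx => hx.neg_right)
    (fun hy => hy.mul_left _) (fun hx => hx.mul_right _)

@[simp]
theorem mem_kIdeal {a : R} (ha : ElemSub a a) {x : R} : x ∈ kIdeal a ha ↔ PairSub a x a :=
  TwoSidedIdeal.mem_mk' ..

end PairSub

section MemRaR

variable {R : Type*} [NonUnitalRing R]

theorem memRaR_mul_mul (a x y : R) : MemRaR a (x * a * y) :=
  ⟨1, fun _ => x, fun _ => y, by simp⟩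

theorem MemRaR.zero (a : R) : MemRaR a 0 :=
  ⟨0, Fin.elim0, Fin.elim0, by simp⟩

theorem MemRaR.add {a b c : R} (hb : MemRaR a b) (hc : MemRaR a c) : MemRaR a (b + c) := by
  obtain ⟨n, x, y, rfl⟩ := hb
  obtain ⟨m, x', y', rfl⟩ := hc
  exact ⟨n + m, Fin.append x x', Fin.append y y', by simp [Fin.sum_univ_add]⟩

theorem MemRaR.neg {a b : R} (hb : MemRaR a b) : MemRaR a (-b) := by
  obtain ⟨n, x, y, rfl⟩ := hb
  exact ⟨n, fun i => -x i, y, by simp⟩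

theorem memRaR_mul_mul_of_mem_span {x z : R} (hz : z ∈ TwoSidedIdeal.span {x}) :
    ∀ a b : R, MemRaR x (a * z * b) := by
  induction hz using TwoSidedIdeal.span_induction with
  | mem z hz => rw [Set.mem_singleton_iff.1 hz]; exact memRaR_mul_mul x
  | zero => intro a b; simpa using MemRaR.zero x
  | add y z _ _ hy hz => intro a b; simpa only [mul_add, add_mul] using (hy a b).add (hz a b)
  | neg z _ hz => intro a b; simpa only [mul_neg, neg_mul] using (hz a b).neg
  | left_absorb r z _ hz => intro a b; simpa only [mul_assoc] using hz (a * r) b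
  | right_absorb r z _ hz => intro a b; simpa only [mul_assoc] using hz a (r * b)

end MemRaR

section OrthogonalCopy

variable {R : Type*} [NonUnitalRing R]

theorem pairSub_self_add_mul_mul {g u v : R} (hg : IsIdempotentElem g) (huv : u * v = g)
    (hgv : g * v = 0) (hug : u * g = 0) : PairSub g g (g + v * g * u) := by
  have left : g * (g + v * g * u) = g := by
    rw [mul_add, hg.eq, ← mul_assoc, ← mul_assoc, hgv, zero_mul, zero_mul, add_zero]
  have right : u * (g + v * g * u) = g * u := by
    rw [mul_add, hug, zero_add, ← mul_assoc, ← mul_assoc, huv, hg.eq]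
  refine pairSub_iff.2 ⟨g, u, g, v, ?_, ?_, ?_, ?_⟩
  · rw [left, hg.eq]
  · rw [left, hgv]
  · rw [right, mul_assoc, hug, mul_zero]
  · rw [right, mul_assoc, huv, hg.eq]

theorem pairSub_self_of_mul_eq (hpi : ∀ a b : R, MemRaR a b → ElemSub b a) {g u v : R}
    (hg : IsIdempotentElem g) (huv : u * v = g) (hgv : g * v = 0) : PairSub g g g := by
  have hu'v : (u - u * g) * v = g := by rw [sub_mul, mul_assoc, hgv, mul_zero, sub_zero, huv]
  have hu'g : (u - u * g) * g = 0 := by rw [sub_mul, mul_assoc, hg.eq, sub_self]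
  refine (pairSub_self_add_mul_mul hg hu'v hgv hu'g).trans_elemSub (hpi g _ ?_)
  have hggg : MemRaR g g := by simpa only [hg.eq] using memRaR_mul_mul g g g
  exact hggg.add (memRaR_mul_mul g v (u - u * g))

end OrthogonalCopy

section Lifting

variable {R S : Type*} [NonUnitalRing R] [NonUnitalRing S]

theorem IsExchangeRing.exists_idempotent_le (hex : IsExchangeRing R) (π : R →ₙ+* S) {e q : R}
    (he : IsIdempotentElem e) (heq : e * q = q) (hqe : q * e = q) (hq : IsIdempotentElem (π q)) :
    ∃ f r : R, IsIdempotentElem f ∧ e * f = f ∧ f * e = f ∧ f = q * r ∧ π q * π f = π q := by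
  obtain ⟨g, r, s, hg, hgr, hgs⟩ := hex q
  have heg : e * g = g := by rw [hgr, ← mul_assoc, heq]
  have hqg : π q * π g = π q := by
    rw [hgs, map_sub, map_add, map_mul, mul_sub, mul_add, hq.eq, ← mul_assoc, hq.eq,
      add_sub_cancel_right]
  refine ⟨g * e, r * e, ?_, ?_, ?_, ?_, ?_⟩
  · rw [IsIdempotentElem, mul_assoc, ← mul_assoc e, heg, ← mul_assoc, hg.eq]
  · rw [← mul_assoc, heg]
  · rw [mul_assoc, he.eq]
  · rw [hgr, mul_assoc]
  · rw [map_mul, ← mul_assoc, hqg, ← map_mul, hqe]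

theorem exists_isProperlyInfiniteElem_le_of_mul_eq_zero (hex : IsExchangeRing R)
    (hpi : ∀ a b : R, MemRaR a b → ElemSub b a) {π : R →ₙ+* S} (hπ : Function.Surjective π)
    {f : R} (hf : IsIdempotentElem f) (hπf : π f ≠ 0) {s : S} (hfs : π f * s = 0)
    (hs : ElemSub (π f) s) :
    ∃ g : R, IsIdempotentElem g ∧ f * g = g ∧ g * f = g ∧ IsProperlyInfiniteElem g ∧ π g ≠ 0 := by
  obtain ⟨p', q', hpq⟩ := hs
  obtain ⟨p, rfl⟩ := hπ p'
  obtain ⟨q, rfl⟩ := hπ q'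
  obtain ⟨w, hfw, rfl⟩ : ∃ w, f * w = 0 ∧ π w = s := by
    obtain ⟨t, rfl⟩ := hπ s
    exact ⟨t - f * t, by rw [mul_sub, ← mul_assoc, hf.eq, sub_self],
      by rw [map_sub, map_mul, hfs, sub_zero]⟩
  have hπc : π (f * (p * w * q) * f) = π f := by
    rw [map_mul, map_mul, map_mul, map_mul, ← hpq, ← map_mul, ← map_mul, hf.eq, hf.eq]
  obtain ⟨g, r, hg, hfg, hgf, hgr, hπg⟩ := hex.exists_idempotent_le π hf
    (q := f * (p * w * q) * f) (by rw [← mul_assoc, ← mul_assoc, hf.eq])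
    (by rw [mul_assoc, hf.eq]) (by rw [hπc]; exact hf.map π)
  have hπg_ne : π g ≠ 0 := fun h => hπf (by rw [← hπc, ← hπg, h, mul_zero])
  have hcopy : f * p * (w * (q * f * r)) = g := by
    rw [hgr]
    simp only [mul_assoc]
  have horth : g * (w * (q * f * r)) = 0 := by
    rw [← hgf, mul_assoc, ← mul_assoc f, hfw, zero_mul, mul_zero]
  exact ⟨g, hg, hfg, hgf, ⟨ne_of_apply_ne π (by rwa [map_zero]),
    pairSub_self_of_mul_eq hpi hg hcopy horth⟩, hπg_ne⟩

end Lifting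

section Quotient

variable {R : Type*} [NonUnitalRing R]

/-- The projection of a nonunital ring onto its quotient by a two-sided ideal; Mathlib's
`RingCon.mk'` is only available for unital rings. -/
def quotientMk (I : TwoSidedIdeal R) : R →ₙ+* I.ringCon.Quotient where
  toFun := (↑)
  map_mul' _ _ := rfl
  map_zero' := rfl
  map_add' _ _ := rfl

theorem quotientMk_surjective (I : TwoSidedIdeal R) : Function.Surjective (quotientMk I) :=
  Quotient.mk''_surjective

theorem quotientMk_eq_zero_iff {I : TwoSidedIdeal R} {x : R} : quotientMk I x = 0 ↔ x ∈ I :=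
  RingCon.eq I.ringCon

theorem exists_le_maximal_notMem {I : TwoSidedIdeal R} {e : R} (he : e ∉ I) :
    ∃ P : TwoSidedIdeal R, I ≤ P ∧ Maximal (e ∉ ·) P := by
  refine zorn_le_nonempty₀ {J : TwoSidedIdeal R | e ∉ J} (fun c hc hchain J₀ hJ₀ => ?_) I he
  let U : TwoSidedIdeal R := .mk' {x | ∃ J ∈ c, x ∈ J} ⟨J₀, hJ₀, J₀.zero_mem⟩
    (by
      rintro x y ⟨J, hJ, hx⟩ ⟨K, hK, hy⟩
      rcases hchain.total hJ hK with hJK | hKJ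
      · exact ⟨K, hK, K.add_mem (hJK hx) hy⟩
      · exact ⟨J, hJ, J.add_mem hx (hKJ hy)⟩)
    (fun ⟨J, hJ, hx⟩ => ⟨J, hJ, J.neg_mem hx⟩)
    (fun ⟨J, hJ, hy⟩ => ⟨J, hJ, J.mul_mem_left _ _ hy⟩)
    (fun ⟨J, hJ, hx⟩ => ⟨J, hJ, J.mul_mem_right _ _ hx⟩)
  have mem_U {x : R} : x ∈ U ↔ ∃ J ∈ c, x ∈ J := TwoSidedIdeal.mem_mk' ..
  refine ⟨U, fun heU => ?_, fun J hJ x hx => mem_U.2 ⟨J, hJ, hx⟩⟩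
  obtain ⟨J, hJ, heJ⟩ := mem_U.1 heU
  exact hc hJ heJ

theorem elemSub_quotientMk_of_maximal (hpi : ∀ a b : R, MemRaR a b → ElemSub b a) {e : R}
    (he : IsIdempotentElem e) {P : TwoSidedIdeal R} (hP : Maximal (e ∉ ·) P)
    {s : P.ringCon.Quotient} (hs : s ≠ 0) : ElemSub (quotientMk P e) s := by
  obtain ⟨x, rfl⟩ := quotientMk_surjective P s
  have hxP : x ∉ P := fun h => hs (quotientMk_eq_zero_iff.2 h)
  have he_sup : e ∈ P ⊔ TwoSidedIdeal.span {x} := by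
    by_contra h
    exact hxP (hP.le_of_ge h le_sup_left
      (TwoSidedIdeal.mem_sup_right (TwoSidedIdeal.subset_span (Set.mem_singleton x))))
  obtain ⟨p, hp, z, hz, hpz⟩ := TwoSidedIdeal.mem_sup.1 he_sup
  obtain ⟨a, b, hab⟩ := hpi x _ (memRaR_mul_mul_of_mem_span hz e e)
  have hez : quotientMk P e = quotientMk P z := by
    rw [← hpz, map_add, quotientMk_eq_zero_iff.2 hp, zero_add]
  refine ⟨quotientMk P a, quotientMk P b, ?_⟩
  rw [← map_mul, ← map_mul, ← hab, map_mul, map_mul, ← hez, (he.map _).eq, (he.map _).eq]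

end Quotient

section DivisionRing

variable {R S : Type*} [NonUnitalRing R] [NonUnitalRing S]

theorem mul_eq_self_of_forall_mul_eq_self {u : R} (hu : u ≠ 0) (hleft : ∀ x : R, u * x = x)
    (hsub : ∀ x : R, x ≠ 0 → ElemSub u x) (x : R) : x * u = x := by
  by_contra hx
  obtain ⟨a, b, hab⟩ := hsub (x - x * u) (sub_ne_zero.2 (Ne.symm hx))
  rw [mul_assoc, sub_mul, mul_assoc x, hleft, sub_self, mul_zero] at hab
  exact hu hab

theorem isDivisionRingPred_of_exists_right_inverse {u : R} (hu : u ≠ 0)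
    (hid : ∀ x : R, u * x = x ∧ x * u = x) (hinv : ∀ x : R, x ≠ 0 → ∃ y, x * y = u) :
    IsDivisionRingPred R := by
  refine ⟨u, hu, hid, fun x hx => ?_⟩
  obtain ⟨y, hxy⟩ := hinv x hx
  have hy : y ≠ 0 := by
    rintro rfl
    exact hu (by rw [← hxy, mul_zero])
  obtain ⟨z, hyz⟩ := hinv y hy
  have hxz : x = z := by rw [← (hid x).2, ← hyz, ← mul_assoc, hxy, (hid z).1]
  exact ⟨y, hxy, by rw [hxz, hyz]⟩

theorem exists_right_inverse_of_no_idempotent_between (hex : IsExchangeRing R) {π : R →ₙ+* S}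
    (hπ : Function.Surjective π) {e : R} (he : IsIdempotentElem e) (hπe : π e ≠ 0)
    (hid : ∀ s : S, π e * s = s ∧ s * π e = s)
    (hidem : ∀ f : R, IsIdempotentElem f → e * f = f → f * e = f → π f ≠ 0 → π f = π e)
    {s : S} (hs : ElemSub (π e) s) : ∃ t, s * t = π e := by
  obtain ⟨x, rfl⟩ := hπ s
  obtain ⟨a', b', hab⟩ := hs
  obtain ⟨a, rfl⟩ := hπ a'
  obtain ⟨b, rfl⟩ := hπ b'
  have hπq : π (e * (x * b * a) * e) = π x * π b * π a := by
    simp only [map_mul, (hid _).1, (hid _).2]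
  have hq : IsIdempotentElem (π (e * (x * b * a) * e)) :=
    calc π (e * (x * b * a) * e) * π (e * (x * b * a) * e)
        = π x * π b * (π a * π x * π b) * π a := by rw [hπq]; simp only [mul_assoc]
      _ = π (e * (x * b * a) * e) := by rw [← hab, (hid _).2, hπq]
  have hq_ne : π (e * (x * b * a) * e) ≠ 0 := fun h => hπe <|
    calc π e = (π a * π x * π b) * (π a * π x * π b) := by rw [← hab, (he.map π).eq]
      _ = π a * (π x * π b * π a) * (π x * π b) := by simp only [mul_assoc]
      _ = 0 := by rw [← hπq, h, mul_zero, zero_mul]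
  obtain ⟨f, r, hf, hef, hfe, hfr, hqf⟩ := hex.exists_idempotent_le π he
    (q := e * (x * b * a) * e) (by rw [← mul_assoc, ← mul_assoc, he.eq])
    (by rw [mul_assoc, he.eq]) hq
  have hπf : π f ≠ 0 := fun h => hq_ne (by rw [← hqf, h, mul_zero])
  refine ⟨π b * π a * π r, ?_⟩
  rw [← hidem f hf hef hfe hπf, hfr, map_mul, hπq]
  simp only [mul_assoc]

theorem isDivisionRingPred_of_forall_isProperlyInfiniteElem_map_eq_zero (hex : IsExchangeRing R)
    (hpi : ∀ a b : R, MemRaR a b → ElemSub b a) {π : R →ₙ+* S} (hπ : Function.Surjective π)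
    {e : R} (he : IsIdempotentElem e) (hπe : π e ≠ 0)
    (hsub : ∀ s : S, s ≠ 0 → ElemSub (π e) s)
    (hinf : ∀ g : R, IsIdempotentElem g → e * g = g → g * e = g → IsProperlyInfiniteElem g →
      π g = 0) :
    IsDivisionRingPred S := by
  have cancel {f : R} (hf : IsIdempotentElem f) (hef : e * f = f) (hfe : f * e = f)
      (hπf : π f ≠ 0) {s : S} (hfs : π f * s = 0) : s = 0 := by
    by_contra hs
    obtain ⟨a, b, hab⟩ := hsub s hs
    have hfs_sub : ElemSub (π f) s := by
      refine ⟨π f * a, b, ?_⟩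
      rw [mul_assoc, mul_assoc, ← mul_assoc a, ← hab, ← map_mul, hfe]
    obtain ⟨g, hg, hfg, hgf, hg_inf, hπg⟩ :=
      exists_isProperlyInfiniteElem_le_of_mul_eq_zero hex hpi hπ hf hπf hfs hfs_sub
    exact hπg (hinf g hg (by rw [← hfg, ← mul_assoc, hef]) (by rw [← hgf, mul_assoc, hfe]) hg_inf)
  have left_id (s : S) : π e * s = s := by
    refine (sub_eq_zero.1 (cancel he he.eq he.eq hπe ?_)).symm
    rw [mul_sub, ← mul_assoc, (he.map π).eq, sub_self]
  have right_id := mul_eq_self_of_forall_mul_eq_self hπe left_id hsub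
  have no_idempotent_between (f : R) (hf : IsIdempotentElem f) (hef : e * f = f)
      (hfe : f * e = f) (hπf : π f ≠ 0) : π f = π e := by
    refine (sub_eq_zero.1 (cancel hf hef hfe hπf ?_)).symm
    rw [mul_sub, right_id, (hf.map π).eq, sub_self]
  have hid (s : S) : π e * s = s ∧ s * π e = s := ⟨left_id s, right_id s⟩
  exact isDivisionRingPred_of_exists_right_inverse hπe hid fun s hs =>
    exists_right_inverse_of_no_idempotent_between hex hπ he hπe hid no_idempotent_between
      (hsub s hs)

end DivisionRing

/-- Proposition 5.8 (ExchangePi1infinite): in a purely infinite exchange ring, every nonzero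
idempotent is properly infinite. -/
theorem idempotents_properlyInfinite_in_purelyInfinite_exchange {R : Type*} [NonUnitalRing R]
    (hex : IsExchangeRing R) (hpi : IsPurelyInfiniteRing R) :
    ∀ e : R, IsIdempotentElem e → e ≠ 0 → IsProperlyInfiniteElem e := by
  intro e he he_ne
  refine ⟨he_ne, ?_⟩
  by_contra he_inf
  have hee : ElemSub e e := ⟨e, e, by rw [he.eq, he.eq]⟩
  have heK : e ∉ kIdeal e hee := fun h => he_inf ((mem_kIdeal hee).1 h)
  obtain ⟨P, hKP, hP⟩ := exists_le_maximal_notMem heK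
  obtain ⟨no_division_quotient, elemSub_of_memRaR⟩ := hpi
  apply no_division_quotient P
  refine isDivisionRingPred_of_forall_isProperlyInfiniteElem_map_eq_zero hex elemSub_of_memRaR
    (quotientMk_surjective P) he (fun h => hP.prop (quotientMk_eq_zero_iff.1 h))
    (fun s => elemSub_quotientMk_of_maximal elemSub_of_memRaR he hP) ?_
  intro g hg heg hge hg_inf
  exact quotientMk_eq_zero_iff.2
    (hKP ((mem_kIdeal hee).2 (hg_inf.2.of_idempotent_le hg he heg hge)))
end

section
/- Let V be an abelian monoid with the refinement property and let u ∈ V. Suppose that for every o-ideal I of V, the congruence class of u in the quotient monoid V/I is not irreducible (i.e. either u ∈ I, or there exist a, b ∈ V with a ∉ I, b ∉ I, and a + b ≡_I u). Then there exist x, y ∈ V such that u = 2x + 3y. -/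
/-!
The elements lying below a multiple of some `x` with `2x ≤ u` form an o-ideal `H`, by refinement.
Suppose `u ∉ H` and let `M ⊇ H` be an o-ideal maximal among those avoiding `u`. Since `u` is not
irreducible modulo `M`, there are `a, b ∉ M` with `a + b ≤ u`. Any `t ≤ a, b` satisfies
`2t ≤ a + b ≤ u`, so `t ∈ H ⊆ M`; but maximality puts `u`, hence `b`, in the o-ideal generated by
`M` and `a`, and Riesz decomposition then forces `b ∈ M`, a contradiction. So `2x ≤ u ≤ nx` for
some `x` and `n`. Write `u = 2x + w`. By Riesz decomposition `w` is a sum of pieces below `x`, and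
these are absorbed one at a time into an expression `2x + 3y`.

All inequalities refer to the algebraic preorder, for which `V` is a `CanonicallyOrderedAdd`
monoid; o-ideals are then exactly the additive submonoids that are lower sets.
-/

/-- Refinement monoids: two decompositions of an element into two summands have a common
refinement. -/
class IsAddRefinementMonoid (V : Type*) [AddCommMonoid V] : Prop where
  exists_refinement : ∀ x₁ x₂ y₁ y₂ : V, x₁ + x₂ = y₁ + y₂ →
    ∃ z₁₁ z₁₂ z₂₁ z₂₂ : V,
      z₁₁ + z₁₂ = x₁ ∧ z₂₁ + z₂₂ = x₂ ∧ z₁₁ + z₂₁ = y₁ ∧ z₁₂ + z₂₂ = y₂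

/-- The algebraic preorder of a commutative monoid, in which `a ≤ b` means that `a` is a summand
of `b`. It is not an instance, since most monoids already carry an order. -/
abbrev algebraicPreorder (V : Type*) [AddCommMonoid V] : Preorder V where
  le a b := ∃ c, b = a + c
  le_refl a := ⟨0, (add_zero a).symm⟩
  le_trans := by
    rintro a _ _ ⟨c, rfl⟩ ⟨d, rfl⟩
    exact ⟨c + d, add_assoc a c d⟩

theorem algebraicPreorder_canonicallyOrderedAdd (V : Type*) [AddCommMonoid V] :
    letI := algebraicPreorder V
    CanonicallyOrderedAdd V :=
  letI := algebraicPreorder V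
  { exists_add_of_le := id
    le_add_self := fun a b => ⟨b, add_comm b a⟩
    le_self_add := fun _ b => ⟨b, rfl⟩ }

theorem exists_maximal_isLowerSet_notMem {V : Type*} [AddZeroClass V] [LE V]
    {I : AddSubmonoid V} (hI : IsLowerSet (I : Set V)) {u : V} (hu : u ∉ I) :
    ∃ M, I ≤ M ∧
      Maximal (fun J : AddSubmonoid V => IsLowerSet (J : Set V) ∧ u ∉ J) M := by
  refine zorn_le_nonempty₀ {J : AddSubmonoid V | IsLowerSet (J : Set V) ∧ u ∉ J}
    (fun c hc hchain J hJ => ⟨sSup c, ⟨?_, ?_⟩, fun _ => le_sSup⟩) I ⟨hI, hu⟩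
  · rw [AddSubmonoid.coe_sSup_of_directedOn ⟨J, hJ⟩ hchain.directedOn]
    exact isLowerSet_iUnion₂ fun K hK => (hc hK).1
  · rw [AddSubmonoid.mem_sSup_of_directedOn ⟨J, hJ⟩ hchain.directedOn]
    rintro ⟨K, hK, huK⟩
    exact (hc hK).2 huK

/-- The elements below some element of `S`. For the algebraic preorder this is the o-ideal generated
by `S`; it is used to adjoin an element to an o-ideal. -/
def oIdealClosure {V : Type*} [AddCommMonoid V] [Preorder V] [IsOrderedAddMonoid V]
    (S : AddSubmonoid V) : AddSubmonoid V where
  carrier := lowerClosure (S : Set V)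
  zero_mem' := subset_lowerClosure S.zero_mem
  add_mem' := by
    rintro a b ⟨s, hs, has⟩ ⟨t, ht, hbt⟩
    exact ⟨s + t, S.add_mem hs ht, add_le_add has hbt⟩

section CanonicallyOrdered

variable {V : Type*} [AddCommMonoid V] [Preorder V] [CanonicallyOrderedAdd V]

attribute [local instance] CanonicallyOrderedAdd.toIsOrderedAddMonoid

theorem exists_le_add_nsmul_of_maximal {M : AddSubmonoid V} {u a : V}
    (hM : Maximal (fun J : AddSubmonoid V => IsLowerSet (J : Set V) ∧ u ∉ J) M) (ha : a ∉ M) :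
    ∃ m ∈ M, ∃ n : ℕ, u ≤ m + n • a := by
  let N := M ⊔ AddSubmonoid.multiples a
  have hN : N ≤ oIdealClosure N := subset_lowerClosure
  have hu : u ∈ oIdealClosure N := by
    by_contra hu
    have hle : oIdealClosure N ≤ M :=
      hM.le_of_ge ⟨(lowerClosure _).lower, hu⟩ (le_sup_left.trans hN)
    exact ha (hle (hN (le_sup_right (a := M) (AddSubmonoid.mem_multiples a))))
  obtain ⟨s, hs, hus⟩ := hu
  obtain ⟨m, hm, _, ⟨n, rfl⟩, rfl⟩ := AddSubmonoid.mem_sup.mp hs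
  exact ⟨m, hm, n, hus⟩

section Refinement

open IsAddRefinementMonoid (exists_refinement)

variable [IsAddRefinementMonoid V]

theorem riesz_decomposition {a b c : V} (h : a ≤ b + c) :
    ∃ p ≤ b, ∃ q ≤ c, p + q = a := by
  obtain ⟨d, hd⟩ := exists_add_of_le h
  obtain ⟨p, q, r, s, hpq, -, hpr, hqs⟩ := exists_refinement _ _ _ _ hd.symm
  exact ⟨p, le_self_add.trans_eq hpr, q, le_self_add.trans_eq hqs, hpq⟩

theorem mem_of_le_add_nsmul {I : AddSubmonoid V} (hI : IsLowerSet (I : Set V)) {m a b : V}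
    (hm : m ∈ I) {n : ℕ} (hb : b ≤ m + n • a) (hab : ∀ t, t ≤ a → t ≤ b → t ∈ I) : b ∈ I := by
  induction n generalizing b with
  | zero => exact hI (by simpa using hb) hm
  | succ n ih =>
    rw [succ_nsmul, ← add_assoc] at hb
    obtain ⟨p, hp, q, hq, rfl⟩ := riesz_decomposition hb
    exact I.add_mem (ih hp fun t hta htp => hab t hta (htp.trans le_self_add))
      (hab q hq le_add_self)

theorem exists_notMem_add_le_of_add_le_add {I : AddSubmonoid V} (hI : IsLowerSet (I : Set V))
    {a b d u : V} (ha : a ∉ I) (hb : b ∉ I) (hd : d ∈ I) (h : a + b ≤ u + d) :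
    ∃ a' ∉ I, ∃ b' ∉ I, a' + b' ≤ u := by
  obtain ⟨p, hp, q, hq, hpq⟩ := riesz_decomposition h
  obtain ⟨a', b', a'', b'', rfl, rfl, rfl, rfl⟩ := exists_refinement _ _ _ _ hpq
  have hq' : a'' + b'' ∈ I := hI hq hd
  exact ⟨a', fun ha' => ha (I.add_mem ha' (hI le_self_add hq')),
    b', fun hb' => hb (I.add_mem hb' (hI le_add_self hq')), hp⟩

theorem exists_two_nsmul_le_and_le_add {x b c : V} (h : 2 • x ≤ b + c) :
    ∃ t, 2 • t ≤ c ∧ x ≤ b + t := by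
  obtain ⟨B, hB, C, hC, hBC⟩ := riesz_decomposition h
  rw [two_nsmul] at hBC
  obtain ⟨p, r, q, s, rfl, rfl, rfl, hrs⟩ := exists_refinement _ _ _ _ hBC
  obtain ⟨p₁, p₂, q₁, t, rfl, rfl, rfl, rfl⟩ := exists_refinement _ _ _ _ hrs.symm
  refine ⟨t, ?_, ?_⟩
  · calc 2 • t ≤ 2 • t + (q₁ + p₂) := le_self_add
      _ = q₁ + t + (p₂ + t) := by abel
      _ ≤ c := hC
  · calc p₁ + p₂ + (q₁ + t) ≤ p₁ + p₂ + (q₁ + t) + p₁ := le_self_add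
      _ = p₁ + p₂ + (p₁ + q₁) + t := by abel
      _ ≤ b + t := by gcongr

theorem exists_two_nsmul_le_of_two_nsmul_le {u x y : V} (hx : 2 • x ≤ u) (hy : 2 • y ≤ u) :
    ∃ z, 2 • z ≤ u ∧ x ≤ z ∧ y ≤ 2 • z := by
  obtain ⟨w, rfl⟩ := exists_add_of_le hx
  obtain ⟨t, ht, hyt⟩ := exists_two_nsmul_le_and_le_add hy
  refine ⟨x + t, ?_, le_self_add, ?_⟩
  · rw [nsmul_add]
    gcongr
  · calc y ≤ 2 • x + t := hyt
      _ ≤ 2 • x + t + t := le_self_add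
      _ = 2 • (x + t) := by abel

/-- The o-ideal of the elements that lie below a multiple of some `x` with `2x ≤ u`; it contains
`u` itself exactly when `2x ≤ u ≤ nx` for some `x` and `n`. -/
def halfIdeal (u : V) : AddSubmonoid V where
  carrier := {z | ∃ x : V, 2 • x ≤ u ∧ ∃ n : ℕ, z ≤ n • x}
  zero_mem' := ⟨0, by simp, 0, by simp⟩
  add_mem' := by
    rintro a b ⟨x, hx, m, ha⟩ ⟨y, hy, n, hb⟩
    obtain ⟨z, hz, hxz, hyz⟩ := exists_two_nsmul_le_of_two_nsmul_le hx hy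
    refine ⟨z, hz, m + n * 2, ?_⟩
    calc a + b ≤ m • x + n • y := add_le_add ha hb
      _ ≤ m • z + n • 2 • z := by gcongr
      _ = (m + n * 2) • z := by rw [add_nsmul, mul_nsmul']

theorem isLowerSet_halfIdeal (u : V) : IsLowerSet (halfIdeal u : Set V) :=
  fun _ _ hba ⟨x, hx, n, ha⟩ => ⟨x, hx, n, hba.trans ha⟩

theorem mem_halfIdeal_of_two_nsmul_le {u x : V} (hx : 2 • x ≤ u) : x ∈ halfIdeal u :=
  ⟨x, hx, 1, (one_nsmul x).ge⟩

theorem mem_halfIdeal_self_of_no_irreducible_quotient {u : V}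
    (h : ∀ I : AddSubmonoid V, IsLowerSet (I : Set V) → u ∉ I →
      ∃ a ∉ I, ∃ b ∉ I, ∃ d ∈ I, a + b ≤ u + d) :
    u ∈ halfIdeal u := by
  by_contra hu
  obtain ⟨M, hHM, hM⟩ := exists_maximal_isLowerSet_notMem (isLowerSet_halfIdeal u) hu
  obtain ⟨hMlower, huM⟩ := hM.prop
  obtain ⟨a₀, ha₀, b₀, hb₀, d, hd, hle⟩ := h M hMlower huM
  obtain ⟨a, ha, b, hb, hab⟩ := exists_notMem_add_le_of_add_le_add hMlower ha₀ hb₀ hd hle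
  obtain ⟨m, hm, n, hun⟩ := exists_le_add_nsmul_of_maximal hM ha
  have hbn : b ≤ m + n • a := (le_add_self.trans hab).trans hun
  refine hb (mem_of_le_add_nsmul hMlower hm hbn fun t hta htb => ?_)
  have ht : 2 • t ≤ u := by
    rw [two_nsmul]
    exact (add_le_add hta htb).trans hab
  exact hHM (mem_halfIdeal_of_two_nsmul_le ht)

theorem exists_two_nsmul_add_three_nsmul_add_eq {x y w : V} (hw : w ≤ x + y) :
    ∃ x' y', x + y ≤ x' + y' ∧ 2 • x + 3 • y + w = 2 • x' + 3 • y' := by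
  obtain ⟨v, hv, v', hv', rfl⟩ := riesz_decomposition hw
  obtain ⟨x', rfl⟩ := exists_add_of_le hv
  obtain ⟨y', rfl⟩ := exists_add_of_le hv'
  refine ⟨x' + 2 • v', y' + v, ?_, by abel⟩
  calc v + x' + (v' + y') ≤ v + x' + (v' + y') + v' := le_self_add
    _ = x' + 2 • v' + (y' + v) := by abel

theorem exists_two_nsmul_add_three_nsmul_add_eq_of_le_nsmul {x y w : V} {n : ℕ}
    (hw : w ≤ n • (x + y)) :
    ∃ x' y', 2 • x + 3 • y + w = 2 • x' + 3 • y' := by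
  induction n generalizing x y w with
  | zero =>
    have hw' : w ≤ x + y := hw.trans (by simp)
    obtain ⟨x', y', -, h⟩ := exists_two_nsmul_add_three_nsmul_add_eq hw'
    exact ⟨x', y', h⟩
  | succ n ih =>
    rw [succ_nsmul] at hw
    obtain ⟨p, hp, q, hq, rfl⟩ := riesz_decomposition hw
    obtain ⟨x', y', hle, h⟩ := exists_two_nsmul_add_three_nsmul_add_eq hq
    obtain ⟨x'', y'', h'⟩ := ih (hp.trans (nsmul_le_nsmul_right hle n))
    refine ⟨x'', y'', ?_⟩
    rw [← h', ← h]
    abel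

theorem exists_eq_two_nsmul_add_three_nsmul {u x : V} {n : ℕ} (hx : 2 • x ≤ u)
    (hu : u ≤ n • x) : ∃ x' y', u = 2 • x' + 3 • y' := by
  obtain ⟨w, rfl⟩ := exists_add_of_le hx
  have hw : w ≤ n • (x + 0) := by simpa using le_add_self.trans hu
  simpa using exists_two_nsmul_add_three_nsmul_add_eq_of_le_nsmul hw

end Refinement

end CanonicallyOrdered

/-- Theorem 6.7 (23div): let `V` be an abelian refinement monoid and `u ∈ V` such that for
every o-ideal `I` of `V`, the class of `u` is not irreducible in the conical quotient
monoid `V/I` (i.e. either `u ∈ I`, or `u ≡_I a + b` for some `a, b ∉ I`). Then `u = 2x + 3y`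
for some `x, y ∈ V`. -/
theorem exists_two_smul_add_three_smul {V : Type*} [AddCommMonoid V]
    (href : ∀ x1 x2 y1 y2 : V, x1 + x2 = y1 + y2 →
      ∃ z11 z12 z21 z22 : V,
        z11 + z12 = x1 ∧ z21 + z22 = x2 ∧ z11 + z21 = y1 ∧ z12 + z22 = y2)
    (u : V)
    (h : ∀ I : Set V, (0 : V) ∈ I → (∀ x ∈ I, ∀ y ∈ I, x + y ∈ I) →
        (∀ x y : V, x + y ∈ I → x ∈ I ∧ y ∈ I) →
        (u ∈ I ∨ ∃ a b : V, a ∉ I ∧ b ∉ I ∧ ∃ c ∈ I, ∃ d ∈ I, a + b + c = u + d)) :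
    ∃ x y : V, u = 2 • x + 3 • y := by
  let _ : Preorder V := algebraicPreorder V
  have : CanonicallyOrderedAdd V := algebraicPreorder_canonicallyOrderedAdd V
  have : IsAddRefinementMonoid V := ⟨href⟩
  have hu : u ∈ halfIdeal u := mem_halfIdeal_self_of_no_irreducible_quotient fun I hI huI => by
    have hadd : ∀ x y : V, x + y ∈ I → x ∈ I ∧ y ∈ I :=
      fun x y hxy => ⟨hI le_self_add hxy, hI le_add_self hxy⟩
    obtain huI' | ⟨a, b, ha, hb, c, -, d, hd, habc⟩ :=
      h I I.zero_mem (fun x hx y hy => I.add_mem hx hy) hadd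
    · exact absurd huI' huI
    · exact ⟨a, ha, b, hb, d, hd, le_self_add.trans_eq habc⟩
  obtain ⟨x, hx, n, hun⟩ := hu
  exact exists_eq_two_nsmul_add_three_nsmul hx hun
end
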